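/- For p = 2 and every d ∈ ℤ, the minimal energy in the class E_d is σ_2(d) = 2π·|d|^{1/2}; that is, inf{|f|_{W^{1/2,2}} : f ∈ E_d} = 2π·|d|^{1/2}, and the infimum is attained by the map z ↦ z^d. -/

import Mathlib

open MeasureTheory Filter
open scoped ENNReal

noncomputable section

/-- Arc-length measure on the unit circle, realized as a measure on ℂ:
the pushforward of Lebesgue measure on `[0, 2π)` under `θ ↦ exp (θ i)`. -/
def circleMeasure : Measure ℂ :=
  Measure.map (fun θ : ℝ => Complex.exp (θ * Complex.I))
    (volume.restrict (Set.Ico 0 (2 * Real.pi)))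

/-- The unit circle `S¹ ⊆ ℂ`. -/
def unitCircle : Set ℂ := Metric.sphere (0 : ℂ) 1

/-- Gagliardo `p`-energy of `f` over a subset `A ⊆ S¹ × S¹`. -/
def gEnergyOn (p : ℝ) (f : ℂ → ℂ) (A : Set (ℂ × ℂ)) : ℝ≥0∞ :=
  ∫⁻ q in A, ENNReal.ofReal (‖f q.1 - f q.2‖ ^ p / ‖q.1 - q.2‖ ^ 2)
    ∂(circleMeasure.prod circleMeasure)

/-- Total Gagliardo `p`-energy `|f|_{W^{1/p,p}}^p` (as an extended real). -/
def gEnergy (p : ℝ) (f : ℂ → ℂ) : ℝ≥0∞ := gEnergyOn p f Set.univ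

/-- The Gagliardo seminorm `|f|_{W^{1/p,p}}`. -/
def gSeminorm (p : ℝ) (f : ℂ → ℂ) : ℝ := (gEnergy p f).toReal ^ (1 / p)

/-- A continuous map `g : S¹ → S¹` has (winding) degree `d`: it lifts to a
continuous `φ : [0, 2π] → ℝ` with `g (e^{iθ}) = e^{iφ(θ)}` and
`φ(2π) - φ(0) = 2πd`. -/
def HasDegree (g : ℂ → ℂ) (d : ℤ) : Prop :=
  ContinuousOn g unitCircle ∧ (∀ z ∈ unitCircle, g z ∈ unitCircle) ∧
    ∃ φ : ℝ → ℝ, ContinuousOn φ (Set.Icc 0 (2 * Real.pi)) ∧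
      (∀ θ ∈ Set.Icc 0 (2 * Real.pi),
        g (Complex.exp (θ * Complex.I)) = Complex.exp (φ θ * Complex.I)) ∧
      φ (2 * Real.pi) - φ 0 = 2 * Real.pi * d

/-- The class `𝓔_d ⊆ W^{1/p,p}(S¹;S¹)` of maps of (VMO-) degree `d`:
maps with values in `S¹` a.e., finite Gagliardo energy, approximable by
continuous degree-`d` circle maps of finite energy both in `L^p` and in the
Gagliardo seminorm. -/
def classE (p : ℝ) (d : ℤ) : Set (ℂ → ℂ) :=
  {f | AEMeasurable f circleMeasure ∧ (∀ᵐ x ∂circleMeasure, ‖f x‖ = 1) ∧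
    gEnergy p f ≠ ⊤ ∧
    ∃ g : ℕ → ℂ → ℂ,
      (∀ k, HasDegree (g k) d ∧ gEnergy p (g k) ≠ ⊤) ∧
      Tendsto (fun k => ∫ x, ‖f x - g k x‖ ^ p ∂circleMeasure) atTop (nhds 0) ∧
      Tendsto (fun k => gSeminorm p (fun x => f x - g k x)) atTop (nhds 0)}

/-- `σ_p(d)`: the minimal `W^{1/p,p}`-seminorm in the class `𝓔_d`. -/
def sigmaP (p : ℝ) (d : ℤ) : ℝ := sInf (gSeminorm p '' classE p d)

/-- `Dist_{W^{1/p,p}}(𝓔_{d₁}, 𝓔_{d₂}) = sup_{f ∈ 𝓔_{d₁}} inf_{g ∈ 𝓔_{d₂}} |f - g|_{W^{1/p,p}}`. -/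
def DistW (p : ℝ) (d1 d2 : ℤ) : ℝ :=
  sSup ((fun f => sInf ((fun g => gSeminorm p (fun x => f x - g x)) '' classE p d2))
    '' classE p d1)

end

/-!
In terms of the Fourier coefficients `cₙ` of `f`, the energy is `4π² ∑ |n| ‖cₙ‖²`, because the
Fejér kernel has mean one, and the degree of a continuous `f : S¹ → S¹` of finite energy is
`∑ n ‖cₙ‖²`. Hence `4π² |d|` bounds the energy of such maps of degree `d` from below, with equality
for `z ↦ z ^ d`, and Minkowski's inequality carries the bound over to their limits.

The degree formula comes from the autocorrelation `A(t) = ∫ conj f(x) f(x + t) dx`, whose Fourier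
series gives `A'(0) = i ∑ n ‖cₙ‖²`. Writing `f(x) = exp (i (d x + h(x)))` with `h` periodic turns
`A(t)` into the mean of `exp (i D)`, where `D(x) = d t + h(x + t) - h(x)` has mean `d t` and is
uniformly small for small `t`. From `D - sin D ≤ 1 - cos D` the function
`(1 - Re A(t)) - (d t - Im A(t))` is nonnegative near `t = 0` and vanishes there, so its derivative
at `0` vanishes; as `Re A'(0) = 0`, this says `Im A'(0) = d`.
-/

section FourierSeries

open AddCircle ComplexConjugate

variable {T : ℝ} [Fact (0 < T)] {F : AddCircle T → ℂ}

lemma memLp_comp_add_right {p : ℝ≥0∞} (hF : MemLp F p haarAddCircle) (t : AddCircle T) :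
    MemLp (fun x => F (x + t)) p haarAddCircle :=
  hF.comp_measurePreserving (measurePreserving_add_right haarAddCircle t)

lemma fourierCoeff_comp_add_right (F : AddCircle T → ℂ) (t : AddCircle T) (n : ℤ) :
    fourierCoeff (fun x => F (x + t)) n = fourier n t * fourierCoeff F n := by
  have hshift (x : AddCircle T) :
      fourier (-n) x • F (x + t) = fourier n t * (fourier (-n) (x + t) • F (x + t)) := by
    have hone : (fourier n t * fourier (-n) t : ℂ) = 1 := by
      rw [← fourier_add, add_neg_cancel, fourier_zero]
    have hadd : (fourier (-n) (x + t) : ℂ) = fourier (-n) x * fourier (-n) t := by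
      simp only [fourier_apply, smul_add, toCircle_add, Circle.coe_mul]
    rw [hadd, smul_eq_mul, smul_eq_mul]
    linear_combination (-(fourier (-n) x : ℂ) * F (x + t)) * hone
  simp_rw [fourierCoeff, hshift, integral_const_mul]
  rw [integral_add_right_eq_self (fun x => fourier (-n) x • F x) t]

lemma hasSum_conj_fourierCoeff_mul_fourierCoeff {G : AddCircle T → ℂ}
    (hF : MemLp F 2 haarAddCircle) (hG : MemLp G 2 haarAddCircle) :
    HasSum (fun n : ℤ => conj (fourierCoeff F n) * fourierCoeff G n)
      (∫ x, conj (F x) * G x ∂haarAddCircle) := by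
  have hcoeff {H : AddCircle T → ℂ} (hH : MemLp H 2 haarAddCircle) (n : ℤ) :
      inner ℂ (fourierBasis n) (hH.toLp H) = fourierCoeff H n := by
    rw [← HilbertBasis.repr_apply_apply, fourierBasis_repr, fourierCoeff_congr_ae hH.coeFn_toLp]
  have hinner : inner ℂ (hF.toLp F) (hG.toLp G) = ∫ x, conj (F x) * G x ∂haarAddCircle := by
    rw [L2.inner_def]
    refine integral_congr_ae ?_
    filter_upwards [hF.coeFn_toLp, hG.coeFn_toLp] with x hFx hGx
    rw [hFx, hGx, RCLike.inner_apply']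
  simpa only [← inner_conj_symm (hF.toLp F) (fourierBasis _), hcoeff, hinner]
    using fourierBasis.hasSum_inner_mul_inner (hF.toLp F) (hG.toLp G)

lemma lintegral_enorm_sq_eq_tsum_fourierCoeff (hF : MemLp F 2 haarAddCircle) :
    ∫⁻ x, ‖F x‖ₑ ^ 2 ∂haarAddCircle = ∑' n : ℤ, ‖fourierCoeff F n‖ₑ ^ 2 := by
  have hparseval :
      HasSum (fun n : ℤ => ‖fourierCoeff F n‖ ^ 2) (∫ x, ‖F x‖ ^ 2 ∂haarAddCircle) := by
    convert! hasSum_sq_fourierCoeff (hF.toLp F) using 1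
    · rw [fourierCoeff_congr_ae hF.coeFn_toLp]
    · exact integral_congr_ae (hF.coeFn_toLp.symm.fun_comp (‖·‖ ^ 2))
  have hint := (memLp_two_iff_integrable_sq_norm hF.aestronglyMeasurable).1 hF
  simp_rw [← ofReal_norm, ← ENNReal.ofReal_pow (norm_nonneg _)]
  rw [← ofReal_integral_eq_lintegral_ofReal hint (ae_of_all _ fun _ => by positivity),
    ← hparseval.tsum_eq, ENNReal.ofReal_tsum_of_nonneg (fun _ => by positivity) hparseval.summable]

lemma memLp_continuousMap (F : C(AddCircle T, ℂ)) (p : ℝ≥0∞) : MemLp F p haarAddCircle :=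
  (F.memLp (p := ⊤) haarAddCircle ℝ).mono_exponent le_top

lemma lintegral_enorm_sq_sum_fourier (s : Finset ℤ) :
    ∫⁻ t : AddCircle T, ‖∑ k ∈ s, fourier k t‖ₑ ^ 2 ∂haarAddCircle = s.card := by
  have hcoeff (n : ℤ) : fourierCoeff (T := T) (∑ k ∈ s, ⇑(fourier k)) n
      = if n ∈ s then 1 else 0 := by
    rw [fourierCoeff.sum s (fun k => ⇑(fourier k)) fun k _ =>
      memLp_one_iff_integrable.1 (memLp_continuousMap (fourier k) 1)]
    simp [fourierCoeff_fourier, Pi.single_apply]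
  have hparseval := lintegral_enorm_sq_eq_tsum_fourierCoeff
    (memLp_continuousMap (T := T) (∑ k ∈ s, fourier k) 2)
  simp_rw [ContinuousMap.coe_sum, hcoeff, Finset.sum_apply] at hparseval
  rw [hparseval, tsum_eq_sum (s := s) (by simp +contextual)]
  simp +contextual

instance nullSingletonClass_haarAddCircle :
    NullSingletonClass (haarAddCircle : Measure (AddCircle T)) where
  measure_singleton x := by
    have hball := AddCircle.volume_closedBall T (x := x) 0
    have hT : 0 < T := Fact.out
    simpa [volume_eq_smul_haarAddCircle, hT.le, hT.not_ge] using hball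

/-- The integrand is `|n|` times the Fejér kernel. -/
lemma lintegral_enorm_sq_fourier_sub_one_div (n : ℤ) :
    ∫⁻ t : AddCircle T, ‖(fourier n t - 1) / (fourier 1 t - 1)‖ₑ ^ 2 ∂haarAddCircle
      = ‖(n : ℝ)‖ₑ := by
  wlog hn : 0 ≤ n generalizing n
  · have hneg (t : AddCircle T) : ‖(fourier (-n) t - 1 : ℂ)‖ = ‖(fourier n t - 1 : ℂ)‖ := by
      rw [fourier_neg, ← RCLike.norm_conj (fourier n t - 1), map_sub, map_one]
    have hpos := this (-n) (by lia)
    simp_rw [← ofReal_norm, norm_div, hneg] at hpos ⊢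
    simpa using hpos
  lift n to ℕ using hn
  have hgeom : (fun t : AddCircle T => ‖(fourier n t - 1) / (fourier 1 t - 1)‖ₑ ^ 2)
      =ᵐ[haarAddCircle] fun t =>
        ‖∑ k ∈ (Finset.range n).map Nat.castEmbedding, fourier k t‖ₑ ^ 2 := by
    filter_upwards [Measure.ae_ne haarAddCircle 0] with t ht
    have hpow (k : ℕ) : (fourier k t : ℂ) = fourier 1 t ^ k := by
      simp [fourier_apply, toCircle_nsmul]
    have hne : (fourier 1 t : ℂ) ≠ 1 := by
      rw [fourier_one, ← Circle.coe_one, Ne, Circle.coe_inj, ← toCircle_zero]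
      exact (injective_toCircle (Fact.out : 0 < T).ne').ne ht
    simp only [Finset.sum_map, Nat.castEmbedding_apply, hpow, geom_sum_eq hne]
  rw [lintegral_congr_ae hgeom, lintegral_enorm_sq_sum_fourier, Finset.card_map, Finset.card_range]
  simp

lemma fourierCoeff_difference_quotient (hF : Integrable F haarAddCircle) (t : AddCircle T)
    (w : ℂ) (n : ℤ) :
    fourierCoeff (fun x => (F (x + t) - F x) / w) n
      = (fourier n t - 1) / w * fourierCoeff F n := by
  have hquot : (fun x => (F (x + t) - F x) / w)
      = fun x => w⁻¹ * ((fun x => F (x + t)) + fun x => (-1) * F x) x := by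
    ext x
    simp only [Pi.add_apply]
    ring
  rw [hquot, fourierCoeff.const_mul,
    fourierCoeff.add (hF.comp_add_right t) (hF.const_mul (-1)), Pi.add_apply,
    fourierCoeff_comp_add_right, fourierCoeff.const_mul]
  ring

lemma lintegral_difference_quotient_eq_tsum (hF : MemLp F 2 haarAddCircle) :
    ∫⁻ t, ∫⁻ x, ‖(F (x + t) - F x) / (fourier 1 t - 1)‖ₑ ^ 2 ∂haarAddCircle ∂haarAddCircle
      = ∑' n : ℤ, ‖n * ‖fourierCoeff F n‖ ^ 2‖ₑ := by
  have hparseval (t : AddCircle T) :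
      ∫⁻ x, ‖(F (x + t) - F x) / (fourier 1 t - 1)‖ₑ ^ 2 ∂haarAddCircle
        = ∑' n : ℤ, ‖(fourier n t - 1) / (fourier 1 t - 1)‖ₑ ^ 2 * ‖fourierCoeff F n‖ₑ ^ 2 := by
    have hquot : MemLp (fun x => (F (x + t) - F x) / (fourier 1 t - 1)) 2 haarAddCircle := by
      simpa only [div_eq_mul_inv, Pi.sub_apply]
        using ((memLp_comp_add_right hF t).sub hF).mul_const _
    rw [lintegral_enorm_sq_eq_tsum_fourierCoeff hquot]
    simp_rw [fourierCoeff_difference_quotient (hF.integrable one_le_two), enorm_mul, mul_pow]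
  simp_rw [hparseval]
  rw [lintegral_tsum fun n => by fun_prop]
  refine tsum_congr fun n => ?_
  rw [lintegral_mul_const' _ _ (by finiteness), lintegral_enorm_sq_fourier_sub_one_div, enorm_mul,
    enorm_pow, enorm_norm]

lemma hasSum_autocorrelation (hF : MemLp F 2 haarAddCircle) (t : AddCircle T) :
    HasSum (fun n : ℤ => (‖fourierCoeff F n‖ ^ 2 : ℂ) * fourier n t)
      (∫ x, conj (F x) * F (x + t) ∂haarAddCircle) := by
  convert! hasSum_conj_fourierCoeff_mul_fourierCoeff hF (memLp_comp_add_right hF t) using 2 with n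
  rw [fourierCoeff_comp_add_right, ← Complex.conj_mul']
  ring

lemma hasDerivAt_autocorrelation_zero (hF : MemLp F 2 haarAddCircle)
    (hsum : Summable fun n : ℤ => n * ‖fourierCoeff F n‖ ^ 2) :
    HasDerivAt (fun t : ℝ => ∫ x, conj (F x) * F (x + t) ∂haarAddCircle)
      ((2 * Real.pi / T * ∑' n : ℤ, n * ‖fourierCoeff F n‖ ^ 2 : ℝ) * Complex.I) 0 := by
  have hterm (n : ℤ) (t : ℝ) := (hasDerivAt_fourier T n t).const_mul (‖fourierCoeff F n‖ ^ 2 : ℂ)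
  have hbound (n : ℤ) (t : ℝ) :
      ‖(‖fourierCoeff F n‖ ^ 2 : ℂ)
          * (2 * Real.pi * Complex.I * n / T * fourier n (t : AddCircle T))‖
        ≤ 2 * Real.pi / T * ‖n * ‖fourierCoeff F n‖ ^ 2‖ := by
    have hunit : ‖(fourier n (t : AddCircle T) : ℂ)‖ = 1 := Circle.norm_coe _
    have hT : 0 < T := Fact.out
    simp only [norm_mul, norm_div, norm_pow, hunit, Complex.norm_real, Complex.norm_I,
      Complex.norm_intCast, Complex.norm_ofNat, Real.norm_eq_abs, abs_of_pos hT,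
      abs_of_pos Real.pi_pos, abs_norm]
    exact le_of_eq (by ring)
  have hderiv := hasDerivAt_tsum (hsum.norm.mul_left _) hterm hbound
    (hasSum_autocorrelation hF (0 : ℝ)).summable 0
  convert! hderiv using 1
  · ext t
    exact (hasSum_autocorrelation hF t).tsum_eq.symm
  · rw [Complex.ofReal_mul, Complex.ofReal_tsum, ← tsum_mul_left, ← tsum_mul_right]
    refine tsum_congr fun n => ?_
    rw [AddCircle.coe_zero, fourier_eval_zero]
    push_cast
    ring

end FourierSeries

section UnitCircle

open AddCircle

instance fact_two_pi_pos : Fact (0 < 2 * Real.pi) := ⟨Real.two_pi_pos⟩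

/-- A function on the unit circle, read in the angle variable on `ℝ / 2πℤ`, where Fourier
coefficients are available. -/
noncomputable def circlePullback (f : ℂ → ℂ) (x : AddCircle (2 * Real.pi)) : ℂ := f (toCircle x)

lemma coe_toCircle_coe (θ : ℝ) :
    (toCircle (θ : AddCircle (2 * Real.pi)) : ℂ) = Complex.exp (θ * Complex.I) := by
  rw [toCircle_apply_mk, div_self Real.two_pi_pos.ne', one_mul, Circle.coe_exp]

lemma measurableEmbedding_coe_toCircle {T : ℝ} [Fact (0 < T)] :
    MeasurableEmbedding fun x : AddCircle T => (toCircle x : ℂ) :=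
  (Continuous.isClosedEmbedding (by fun_prop) (Subtype.val_injective.comp
    (injective_toCircle (Fact.out : 0 < T).ne'))).measurableEmbedding

lemma measurePreserving_coe_toCircle :
    MeasurePreserving (fun x : AddCircle (2 * Real.pi) => (toCircle x : ℂ)) volume
      circleMeasure := by
  refine ⟨measurableEmbedding_coe_toCircle.measurable, ?_⟩
  have hmk := AddCircle.measurePreserving_mk (2 * Real.pi) 0
  rw [← hmk.map_eq, Measure.map_map measurableEmbedding_coe_toCircle.measurable hmk.measurable,
    circleMeasure, Measure.restrict_congr_set Ico_ae_eq_Ioc, zero_add]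
  exact congrArg (Measure.map · _) (funext coe_toCircle_coe)

lemma memLp_circlePullback_iff {f : ℂ → ℂ} {p : ℝ≥0∞} :
    MemLp (circlePullback f) p haarAddCircle ↔ MemLp f p circleMeasure := by
  rw [memLp_haarAddCircle_iff, ← measurePreserving_coe_toCircle.map_eq,
    measurableEmbedding_coe_toCircle.memLp_map_measure_iff]
  rfl

lemma gEnergy_two_eq_lintegral_haarAddCircle (f : ℂ → ℂ) :
    gEnergy 2 f = ENNReal.ofReal ((2 * Real.pi) ^ 2) *
      ∫⁻ q : AddCircle (2 * Real.pi) × AddCircle (2 * Real.pi),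
        ‖(circlePullback f (q.1 + q.2) - circlePullback f q.1) / (fourier 1 q.2 - 1)‖ₑ ^ 2
          ∂(haarAddCircle.prod haarAddCircle) := by
  have hquot (q : ℂ × ℂ) : ENNReal.ofReal (‖f q.1 - f q.2‖ ^ (2 : ℝ) / ‖q.1 - q.2‖ ^ 2)
      = ‖(f q.2 - f q.1) / (q.2 - q.1)‖ₑ ^ 2 := by
    rw [← ofReal_norm, ← ENNReal.ofReal_pow (norm_nonneg _), norm_div, div_pow, Real.rpow_two,
      norm_sub_rev (f q.1), norm_sub_rev q.1]
  have hvol : (volume.prod volume : Measure (AddCircle (2 * Real.pi) × AddCircle (2 * Real.pi)))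
      = ENNReal.ofReal ((2 * Real.pi) ^ 2) • haarAddCircle.prod haarAddCircle := by
    rw [volume_eq_smul_haarAddCircle, Measure.prod_smul_left, Measure.prod_smul_right, smul_smul,
      ← ENNReal.ofReal_mul Real.two_pi_pos.le, ← sq]
  have hrotate (q : AddCircle (2 * Real.pi) × AddCircle (2 * Real.pi)) :
      ‖(circlePullback f (q.1 + q.2) - circlePullback f q.1) / (fourier 1 q.2 - 1)‖ₑ
        = ‖(f (toCircle (q.1 + q.2)) - f (toCircle q.1))
            / (toCircle (q.1 + q.2) - toCircle q.1)‖ₑ := by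
    rw [← ofReal_norm, ← ofReal_norm, norm_div, norm_div, circlePullback, circlePullback,
      fourier_one, toCircle_add, Circle.coe_mul, ← mul_sub_one, norm_mul, Circle.norm_coe, one_mul]
  rw [gEnergy, gEnergyOn, Measure.restrict_univ]
  simp_rw [hquot, hrotate]
  rw [← (measurePreserving_coe_toCircle.prod measurePreserving_coe_toCircle).lintegral_comp_emb
      (measurableEmbedding_coe_toCircle.prodMap measurableEmbedding_coe_toCircle),
    hvol, lintegral_smul_measure, smul_eq_mul,
    ← (measurePreserving_prod_add haarAddCircle haarAddCircle).lintegral_comp_emb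
      (MeasurableEquiv.shearAddRight _).measurableEmbedding]
  rfl

lemma gEnergy_two_eq_tsum {f : ℂ → ℂ} (hf : MemLp f 2 circleMeasure) :
    gEnergy 2 f = ENNReal.ofReal ((2 * Real.pi) ^ 2) *
      ∑' n : ℤ, ‖n * ‖fourierCoeff (circlePullback f) n‖ ^ 2‖ₑ := by
  have hF := memLp_circlePullback_iff.2 hf
  have hshift : AEMeasurable (fun q : AddCircle (2 * Real.pi) × AddCircle (2 * Real.pi) =>
      circlePullback f (q.1 + q.2)) (haarAddCircle.prod haarAddCircle) :=
    (hF.aestronglyMeasurable.aemeasurable.comp_quasiMeasurePreserving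
      Measure.quasiMeasurePreserving_snd).comp_quasiMeasurePreserving
      (measurePreserving_prod_add haarAddCircle haarAddCircle).quasiMeasurePreserving
  have hbase : AEMeasurable (fun q : AddCircle (2 * Real.pi) × AddCircle (2 * Real.pi) =>
      circlePullback f q.1) (haarAddCircle.prod haarAddCircle) :=
    hF.aestronglyMeasurable.aemeasurable.comp_quasiMeasurePreserving
      Measure.quasiMeasurePreserving_fst
  rw [gEnergy_two_eq_lintegral_haarAddCircle, ← lintegral_difference_quotient_eq_tsum hF,
    lintegral_prod_symm _ (by fun_prop)]

lemma coe_toCircle_mem_unitCircle {T : ℝ} (x : AddCircle T) : (toCircle x : ℂ) ∈ unitCircle :=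
  (toCircle x).2

lemma ae_mem_unitCircle : ∀ᵐ z ∂circleMeasure, z ∈ unitCircle := by
  rw [← measurePreserving_coe_toCircle.map_eq, measurableEmbedding_coe_toCircle.ae_map_iff]
  exact ae_of_all _ coe_toCircle_mem_unitCircle

lemma continuous_circlePullback {f : ℂ → ℂ} (hf : ContinuousOn f unitCircle) :
    Continuous (circlePullback f) :=
  hf.comp_continuous (by fun_prop) coe_toCircle_mem_unitCircle

lemma memLp_circleMeasure_of_continuousOn {f : ℂ → ℂ} (hf : ContinuousOn f unitCircle)
    (p : ℝ≥0∞) : MemLp f p circleMeasure :=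
  memLp_circlePullback_iff.1 (memLp_continuousMap ⟨_, continuous_circlePullback hf⟩ p)

lemma continuousOn_zpow_unitCircle (d : ℤ) : ContinuousOn (fun z : ℂ => z ^ d) unitCircle :=
  continuousOn_id.zpow₀ d fun _ hz => Or.inl (ne_zero_of_mem_unit_sphere ⟨_, hz⟩)

lemma circlePullback_zpow (d : ℤ) : circlePullback (fun z => z ^ d) = fourier d := by
  ext x
  rw [circlePullback, fourier_apply, toCircle_zsmul, Circle.coe_zpow]

lemma gEnergy_two_zpow (d : ℤ) :
    gEnergy 2 (fun z => z ^ d) = ENNReal.ofReal ((2 * Real.pi) ^ 2 * |(d : ℝ)|) := by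
  rw [gEnergy_two_eq_tsum (memLp_circleMeasure_of_continuousOn (continuousOn_zpow_unitCircle d) 2),
    circlePullback_zpow, fourierCoeff_fourier, tsum_eq_single d (by simp +contextual),
    ENNReal.ofReal_mul (by positivity), ← Real.norm_eq_abs, ofReal_norm]
  simp

end UnitCircle

section Degree

open AddCircle ComplexConjugate

lemma self_sub_sin_le_one_sub_cos {y : ℝ} (hy : |y| ≤ 1) : y - Real.sin y ≤ 1 - Real.cos y := by
  have hcube : |y| ^ 3 ≤ y ^ 2 := by
    rw [← sq_abs]
    exact pow_le_pow_of_le_one (abs_nonneg y) hy (by norm_num)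
  calc y - Real.sin y ≤ |y| ^ 3 / 6 := (le_abs_self _).trans (Real.abs_sub_sin_le y)
    _ ≤ y ^ 2 / 2 - y ^ 4 * (5 / 96) := by
      nlinarith [sq_nonneg y, (sq_le_one_iff_abs_le_one y).2 hy]
    _ ≤ 1 - Real.cos y := by
      have hcos := (abs_le.1 (Real.cos_bound hy)).2
      rw [Even.pow_abs (by decide)] at hcos
      linarith

lemma integral_sub_im_integral_exp_le {α : Type*} [MeasurableSpace α] {μ : Measure α}
    [IsProbabilityMeasure μ] {D : α → ℝ} (hmeas : AEStronglyMeasurable D μ)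
    (hD : ∀ x, |D x| ≤ 1) :
    ∫ x, D x ∂μ - (∫ x, Complex.exp (D x * Complex.I) ∂μ).im
      ≤ 1 - (∫ x, Complex.exp (D x * Complex.I) ∂μ).re := by
  have hint : Integrable D μ := .of_bound hmeas 1 (ae_of_all _ hD)
  have hexp : Integrable (fun x => Complex.exp (D x * Complex.I)) μ :=
    .of_bound (by fun_prop) 1 (ae_of_all _ fun x => (Complex.norm_exp_ofReal_mul_I _).le)
  have hre := Complex.reCLM.integral_comp_comm hexp
  have him := Complex.imCLM.integral_comp_comm hexp
  simp only [Complex.reCLM_apply, Complex.exp_ofReal_mul_I_re] at hre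
  simp only [Complex.imCLM_apply, Complex.exp_ofReal_mul_I_im] at him
  have hcos : Integrable (fun x => Real.cos (D x)) μ :=
    .of_bound (by fun_prop) 1 (ae_of_all _ fun x => Real.abs_cos_le_one _)
  have hsin : Integrable (fun x => Real.sin (D x)) μ :=
    .of_bound (by fun_prop) 1 (ae_of_all _ fun x => Real.abs_sin_le_one _)
  calc ∫ x, D x ∂μ - (∫ x, Complex.exp (D x * Complex.I) ∂μ).im
      = ∫ x, (D x - Real.sin (D x)) ∂μ := by rw [integral_sub hint hsin, him]
    _ ≤ ∫ x, (1 - Real.cos (D x)) ∂μ :=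
      integral_mono (hint.sub hsin) ((integrable_const 1).sub hcos)
        fun x => self_sub_sin_le_one_sub_cos (hD x)
    _ = 1 - (∫ x, Complex.exp (D x * Complex.I) ∂μ).re := by
      rw [integral_sub (integrable_const 1) hcos, hre, integral_const, probReal_univ, one_smul]

lemma eq_of_hasDerivAt_of_eventually_sub_im_le_one_sub_re {A : ℝ → ℂ} {c s : ℝ}
    (hA : HasDerivAt A (s * Complex.I) 0) (hA_zero : A 0 = 1)
    (hle : ∀ᶠ t in nhds 0, c * t - (A t).im ≤ 1 - (A t).re) : s = c := by
  have hre : HasDerivAt (fun t => (A t).re) 0 0 := by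
    simpa using! Complex.reCLM.hasFDerivAt.comp_hasDerivAt 0 hA
  have him : HasDerivAt (fun t => (A t).im) s 0 := by
    simpa using! Complex.imCLM.hasFDerivAt.comp_hasDerivAt 0 hA
  have hmin : IsLocalMin (fun t => 1 - (A t).re - (c * t - (A t).im)) 0 := by
    filter_upwards [hle] with t ht
    simpa [hA_zero] using ht
  have hcrit := hmin.hasDerivAt_eq_zero <|
    (hre.const_sub 1).sub ((hasDerivAt_const_mul c).sub him)
  linarith

lemma conj_fourier_mul_exp_mul_fourier_mul_exp {T : ℝ} (d : ℤ) (x : AddCircle T) (t a b : ℝ) :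
    conj (fourier d x * Complex.exp (a * Complex.I))
        * (fourier d (x + t : AddCircle T) * Complex.exp (b * Complex.I))
      = Complex.exp ((2 * Real.pi * d / T * t + (b - a) : ℝ) * Complex.I) := by
  have hunit : conj (fourier d x) * fourier d (x + t : AddCircle T)
      = (fourier d (t : AddCircle T) : ℂ) := by
    rw [← fourier_neg, fourier_apply, fourier_apply, fourier_apply, ← Circle.coe_mul,
      ← toCircle_add]
    congr 2
    simp
  rw [map_mul, mul_mul_mul_comm, hunit, fourier_coe_apply, ← Complex.exp_conj, map_mul,
    Complex.conj_ofReal, Complex.conj_I, ← Complex.exp_add, ← Complex.exp_add]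
  push_cast
  ring_nf

variable {T : ℝ} [Fact (0 < T)]

lemma integral_const_add_comp_add_right_sub {h : AddCircle T → ℝ} (hh : Integrable h haarAddCircle)
    (c : ℝ) (t : AddCircle T) :
    ∫ x, (c + (h (x + t) - h x)) ∂haarAddCircle = c := by
  have hshift : Integrable (fun x => h (x + t)) haarAddCircle := hh.comp_add_right t
  have hdiff : ∫ x, (h (x + t) - h x) ∂haarAddCircle = 0 := by
    rw [integral_sub hshift hh, integral_add_right_eq_self h t, sub_self]
  simpa [hdiff] using integral_add (integrable_const c) (hshift.sub hh)

lemma eventually_autocorrelation_fourier_mul_exp_bound (d : ℤ) (h : C(AddCircle T, ℝ))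
    {F : AddCircle T → ℂ} (hF : ∀ x, F x = fourier d x * Complex.exp (h x * Complex.I)) :
    ∀ᶠ t : ℝ in nhds 0,
      2 * Real.pi * d / T * t - (∫ x, conj (F x) * F (x + t) ∂haarAddCircle).im
        ≤ 1 - (∫ x, conj (F x) * F (x + t) ∂haarAddCircle).re := by
  set D : ℝ → AddCircle T → ℝ := fun t x => 2 * Real.pi * d / T * t + (h (x + t) - h x) with hD
  have hphase (t : ℝ) (x : AddCircle T) :
      conj (F x) * F (x + t) = Complex.exp (D t x * Complex.I) := by
    rw [hF, hF, conj_fourier_mul_exp_mul_fourier_mul_exp]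
  have hmean (t : ℝ) : ∫ x, D t x ∂haarAddCircle = 2 * Real.pi * d / T * t :=
    integral_const_add_comp_add_right_sub
      (h.continuous.integrable_of_hasCompactSupport (.of_compactSpace _)) _ _
  have hcont : Continuous fun q : ℝ × AddCircle T => D q.1 q.2 := by
    have := AddCircle.continuous_mk' T
    simp only [hD]
    fun_prop
  have hsmall : ∀ᶠ t in nhds 0, ∀ x ∈ Set.univ, |D t x| ≤ 1 := by
    refine isCompact_univ.eventually_forall_of_forall_eventually fun x _ => ?_
    refine hcont.abs.continuousAt.eventually_le_const ?_
    simp [hD]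
  filter_upwards [hsmall] with t ht
  simp_rw [hphase, ← hmean]
  exact integral_sub_im_integral_exp_le (by fun_prop) fun x => ht x trivial

lemma tsum_mul_norm_fourierCoeff_sq_fourier_mul_exp (d : ℤ) (h : C(AddCircle T, ℝ))
    {F : AddCircle T → ℂ} (hF : ∀ x, F x = fourier d x * Complex.exp (h x * Complex.I))
    (hsum : Summable fun n : ℤ => n * ‖fourierCoeff F n‖ ^ 2) :
    ∑' n : ℤ, n * ‖fourierCoeff F n‖ ^ 2 = d := by
  have hcont : Continuous F := by
    rw [funext hF]
    fun_prop
  have hnorm (x : AddCircle T) : ‖F x‖ = 1 := by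
    rw [hF, norm_mul, Complex.norm_exp_ofReal_mul_I, mul_one]
    exact Circle.norm_coe _
  have hautocorr_zero : ∫ x, conj (F x) * F (x + (0 : ℝ)) ∂haarAddCircle = 1 := by
    simp [Complex.conj_mul', hnorm]
  have hmem : MemLp F 2 haarAddCircle := memLp_continuousMap ⟨F, hcont⟩ 2
  have hslope := eq_of_hasDerivAt_of_eventually_sub_im_le_one_sub_re
    (hasDerivAt_autocorrelation_zero hmem hsum) hautocorr_zero
    (eventually_autocorrelation_fourier_mul_exp_bound d h hF)
  have hT : 0 < T := Fact.out
  field_simp at hslope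
  exact hslope

lemma HasDegree.exists_circlePullback_eq {g : ℂ → ℂ} {d : ℤ} (hg : HasDegree g d) :
    ∃ h : C(AddCircle (2 * Real.pi), ℝ),
      ∀ x, circlePullback g x = fourier d x * Complex.exp (h x * Complex.I) := by
  obtain ⟨-, -, φ, hφ, hlift, hdeg⟩ := hg
  refine ⟨⟨liftIco (2 * Real.pi) 0 fun θ => φ θ - d * θ,
    liftIco_zero_continuous (by linarith) (by fun_prop)⟩, fun x => ?_⟩
  obtain ⟨θ, hθ, rfl⟩ := eq_coe_Ico x
  rw [circlePullback, coe_toCircle_coe, hlift θ (Set.Ico_subset_Icc_self hθ), fourier_apply,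
    ContinuousMap.coe_mk, liftIco_coe_apply (by rwa [zero_add]), toCircle_zsmul, Circle.coe_zpow,
    coe_toCircle_coe, ← Complex.exp_int_mul, ← Complex.exp_add]
  push_cast
  ring_nf

lemma HasDegree.ofReal_mul_abs_le_gEnergy_two {g : ℂ → ℂ} {d : ℤ} (hg : HasDegree g d) :
    ENNReal.ofReal ((2 * Real.pi) ^ 2 * |(d : ℝ)|) ≤ gEnergy 2 g := by
  rcases eq_or_ne (gEnergy 2 g) ⊤ with htop | hfinite
  · exact htop ▸ le_top
  obtain ⟨h, hg_eq⟩ := hg.exists_circlePullback_eq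
  rw [gEnergy_two_eq_tsum (memLp_circleMeasure_of_continuousOn hg.1 2)] at hfinite ⊢
  have hsum : Summable fun n : ℤ => n * ‖fourierCoeff (circlePullback g) n‖ ^ 2 :=
    .of_enorm fun htop => hfinite <| by
      rw [htop, ENNReal.mul_top (ENNReal.ofReal_pos.2 (by positivity)).ne']
  rw [← tsum_mul_norm_fourierCoeff_sq_fourier_mul_exp d h hg_eq hsum,
    ENNReal.ofReal_mul (by positivity), ← Real.norm_eq_abs, ofReal_norm]
  gcongr
  exact enorm_tsum_le_tsum_enorm

end Degree

section Seminorm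

/-- The measure `|x - y|⁻² dσ(x) dσ(y)` on pairs of points of the circle, for which the Gagliardo
seminorm of `f` is the `L^p` norm of `(x, y) ↦ f x - f y`. Its density is `0` on the diagonal. -/
noncomputable def gagliardoMeasure : Measure (ℂ × ℂ) :=
  (circleMeasure.prod circleMeasure).withDensity
    fun q => ENNReal.ofReal (‖q.1 - q.2‖ ^ 2)⁻¹

variable {p : ℝ} {f g : ℂ → ℂ}

lemma gEnergy_eq_lintegral_gagliardoMeasure (hp : 0 ≤ p) (f : ℂ → ℂ) :
    gEnergy p f = ∫⁻ q, ‖f q.1 - f q.2‖ₑ ^ p ∂gagliardoMeasure := by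
  rw [gEnergy, gEnergyOn, Measure.restrict_univ, gagliardoMeasure,
    lintegral_withDensity_eq_lintegral_mul_non_measurable _ (by fun_prop)
      (ae_of_all _ fun _ => ENNReal.ofReal_lt_top)]
  refine lintegral_congr fun q => ?_
  rw [Pi.mul_apply, ← ofReal_norm, ENNReal.ofReal_rpow_of_nonneg (norm_nonneg _) hp,
    ← ENNReal.ofReal_mul (by positivity), div_eq_inv_mul]

lemma eLpNorm_gagliardoMeasure (hp : 0 < p) (f : ℂ → ℂ) :
    eLpNorm (fun q : ℂ × ℂ => f q.1 - f q.2) (ENNReal.ofReal p) gagliardoMeasure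
      = gEnergy p f ^ (1 / p) := by
  rw [eLpNorm_eq_lintegral_rpow_enorm_toReal (by simpa using hp) ENNReal.ofReal_ne_top,
    ENNReal.toReal_ofReal hp.le, gEnergy_eq_lintegral_gagliardoMeasure hp.le]

lemma gSeminorm_eq_toReal_eLpNorm (hp : 0 < p) (f : ℂ → ℂ) :
    gSeminorm p f
      = (eLpNorm (fun q : ℂ × ℂ => f q.1 - f q.2) (ENNReal.ofReal p) gagliardoMeasure).toReal := by
  rw [eLpNorm_gagliardoMeasure hp, ← ENNReal.toReal_rpow, gSeminorm]

lemma memLp_gagliardoMeasure (hp : 0 < p) (hf : AEMeasurable f circleMeasure)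
    (hfinite : gEnergy p f ≠ ⊤) :
    MemLp (fun q : ℂ × ℂ => f q.1 - f q.2) (ENNReal.ofReal p) gagliardoMeasure := by
  have hfst : AEMeasurable (fun q : ℂ × ℂ => f q.1) (circleMeasure.prod circleMeasure) :=
    hf.comp_quasiMeasurePreserving Measure.quasiMeasurePreserving_fst
  have hsnd : AEMeasurable (fun q : ℂ × ℂ => f q.2) (circleMeasure.prod circleMeasure) :=
    hf.comp_quasiMeasurePreserving Measure.quasiMeasurePreserving_snd
  refine ⟨((hfst.sub hsnd).mono_ac (withDensity_absolutelyContinuous _ _)).aestronglyMeasurable, ?_⟩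
  rw [eLpNorm_gagliardoMeasure hp]
  exact (ENNReal.rpow_ne_top_of_nonneg (by positivity) hfinite).lt_top

lemma gSeminorm_le_add_gSeminorm_sub (hp : 1 ≤ p) (hf : AEMeasurable f circleMeasure)
    (hg : AEMeasurable g circleMeasure) (hf_finite : gEnergy p f ≠ ⊤)
    (hg_finite : gEnergy p g ≠ ⊤) :
    gSeminorm p g ≤ gSeminorm p f + gSeminorm p (fun x => f x - g x) := by
  have hp_pos : 0 < p := by linarith
  have hF := memLp_gagliardoMeasure hp_pos hf hf_finite
  have hG := memLp_gagliardoMeasure hp_pos hg hg_finite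
  have hFG : MemLp (fun q : ℂ × ℂ => f q.1 - g q.1 - (f q.2 - g q.2)) (ENNReal.ofReal p)
      gagliardoMeasure := by
    convert! hF.sub hG using 2
    simp only [Pi.sub_apply]
    ring
  simp only [gSeminorm_eq_toReal_eLpNorm hp_pos]
  rw [← ENNReal.toReal_add hF.eLpNorm_ne_top hFG.eLpNorm_ne_top]
  refine ENNReal.toReal_mono
    (ENNReal.add_ne_top.2 ⟨hF.eLpNorm_ne_top, hFG.eLpNorm_ne_top⟩) ?_
  convert! eLpNorm_sub_le hF.aestronglyMeasurable hFG.aestronglyMeasurable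
    (ENNReal.one_le_ofReal.2 hp) using 2
  ext q
  simp only [Pi.sub_apply]
  ring

end Seminorm

section MinimalEnergy

lemma rpow_half_energy_zpow (d : ℤ) :
    ((2 * Real.pi) ^ 2 * |(d : ℝ)|) ^ ((1 : ℝ) / 2)
      = 2 * Real.pi * |(d : ℝ)| ^ ((1 : ℝ) / 2) := by
  rw [← Real.sqrt_eq_rpow, ← Real.sqrt_eq_rpow, Real.sqrt_mul (by positivity),
    Real.sqrt_sq Real.two_pi_pos.le]

lemma gSeminorm_two_zpow (d : ℤ) :
    gSeminorm 2 (fun z => z ^ d) = 2 * Real.pi * |(d : ℝ)| ^ ((1 : ℝ) / 2) := by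
  rw [gSeminorm, gEnergy_two_zpow, ENNReal.toReal_ofReal (by positivity), rpow_half_energy_zpow]

lemma gEnergy_two_zpow_ne_top (d : ℤ) : gEnergy 2 (fun z => z ^ d) ≠ ⊤ :=
  gEnergy_two_zpow d ▸ ENNReal.ofReal_ne_top

lemma hasDegree_zpow (d : ℤ) : HasDegree (fun z => z ^ d) d := by
  refine ⟨continuousOn_zpow_unitCircle d, fun z hz => ?_, fun θ => d * θ, by fun_prop,
    fun θ _ => ?_, by ring⟩
  · rw [unitCircle, mem_sphere_zero_iff_norm] at hz ⊢
    rw [norm_zpow, hz, one_zpow]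
  · simp only [← Complex.exp_int_mul]
    push_cast
    ring_nf

lemma aemeasurable_circleMeasure_of_continuousOn {f : ℂ → ℂ} (hf : ContinuousOn f unitCircle) :
    AEMeasurable f circleMeasure :=
  (memLp_circleMeasure_of_continuousOn hf 2).aestronglyMeasurable.aemeasurable

lemma HasDegree.mem_classE {p : ℝ} (hp : 0 < p) {g : ℂ → ℂ} {d : ℤ} (hg : HasDegree g d)
    (hfinite : gEnergy p g ≠ ⊤) : g ∈ classE p d := by
  refine ⟨aemeasurable_circleMeasure_of_continuousOn hg.1, ?_, hfinite, fun _ => g,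
    fun _ => ⟨hg, hfinite⟩, ?_, ?_⟩
  · filter_upwards [ae_mem_unitCircle] with z hz
    exact mem_sphere_zero_iff_norm.1 (hg.2.1 z hz)
  · simp [Real.zero_rpow hp.ne']
  · simp [gSeminorm, gEnergy, gEnergyOn, Real.zero_rpow, hp.ne']

lemma HasDegree.le_gSeminorm_two {g : ℂ → ℂ} {d : ℤ} (hg : HasDegree g d)
    (hfinite : gEnergy 2 g ≠ ⊤) :
    2 * Real.pi * |(d : ℝ)| ^ ((1 : ℝ) / 2) ≤ gSeminorm 2 g := by
  rw [← gSeminorm_two_zpow, gSeminorm, gSeminorm, gEnergy_two_zpow]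
  gcongr
  exact hg.ofReal_mul_abs_le_gEnergy_two

lemma le_gSeminorm_of_mem_classE {p c : ℝ} (hp : 1 ≤ p) {d : ℤ}
    (hc : ∀ g, HasDegree g d → gEnergy p g ≠ ⊤ → c ≤ gSeminorm p g) {f : ℂ → ℂ}
    (hf : f ∈ classE p d) : c ≤ gSeminorm p f := by
  obtain ⟨hf_meas, -, hf_finite, g, hg, -, hlim⟩ := hf
  have hadd : Tendsto (fun k => gSeminorm p f + gSeminorm p fun x => f x - g k x) atTop
      (nhds (gSeminorm p f)) := by
    simpa using hlim.const_add (gSeminorm p f)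
  refine ge_of_tendsto' hadd fun k => (hc (g k) (hg k).1 (hg k).2).trans ?_
  exact gSeminorm_le_add_gSeminorm_sub hp hf_meas
    (aemeasurable_circleMeasure_of_continuousOn (hg k).1.1) hf_finite (hg k).2

end MinimalEnergy

/-- **Minimal energy for p = 2.** `σ_2(d) = 2π |d|^{1/2}`, and the infimum is
attained by the map `z ↦ z^d`. -/
theorem sigma_two_eq (d : ℤ) :
    sigmaP 2 d = 2 * Real.pi * (|d| : ℝ) ^ ((1 : ℝ) / 2) ∧
    (fun z : ℂ => z ^ d) ∈ classE 2 d ∧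
    gSeminorm 2 (fun z : ℂ => z ^ d) = 2 * Real.pi * (|d| : ℝ) ^ ((1 : ℝ) / 2) := by
  have hmem : (fun z : ℂ => z ^ d) ∈ classE 2 d :=
    (hasDegree_zpow d).mem_classE two_pos (gEnergy_two_zpow_ne_top d)
  refine ⟨IsLeast.csInf_eq ⟨⟨_, hmem, gSeminorm_two_zpow d⟩, ?_⟩, hmem, gSeminorm_two_zpow d⟩
  rintro _ ⟨f, hf, rfl⟩
  exact le_gSeminorm_of_mem_classE one_le_two (fun _ => HasDegree.le_gSeminorm_two) hf
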